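/- arXiv:2106.00109 — 3 statements merged into one kernel-verified Lean document; each statement's English description precedes it below -/
import Mathlib

section
/- Let α, β > 0 and let (x*, z*, λ*, μ*) ∈ X × ℝᵐ × ℝᵐ₊ × ℝᵐ be a saddle point of the proximal-perturbed Lagrangian L subject to X. Then x* is feasible, i.e. g(x*) ≤ 0 componentwise, and x* minimizes θ over the feasible set: θ(x*) ≤ θ(x) for every x ∈ X with g(x) ≤ 0 componentwise. (Applied to each player ν of a generalized Nash game, with the other players' strategies fixed at their equilibrium values so that θ and g are that player's objective and constraint maps, this says that a collection of saddle points of the players' P-Lagrangians yields a generalized Nash equilibrium.) -/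
/-!
Regrouping `L` in terms of `w = μ - λ` separates it as
`(θ x + ⟪λ, g x⟫) + (⟪w, z⟫ + (α/2) ‖z‖² - (β/2) ‖w‖²)`, and `w` ranges freely because `μ` does.
Freezing `z` and `w` at their saddle values cancels the second bracket from both sides of the saddle
inequality, so `(x*, λ*)` is a saddle point of the ordinary Lagrangian on `X × ℝᵐ₊`, where the
classical argument applies: adding multipliers to `λ*` gives feasibility, and comparing with `λ = 0`
gives complementary slackness.
-/

open scoped InnerProductSpace
open Filter Topology

/-- The proximal-perturbed Lagrangian (P-Lagrangian)
`L(x, z, λ, μ) = θ(x) + ⟨λ, g(x) − z⟩ + ⟨μ, z⟩ + (α/2)‖z‖² − (β/2)‖λ − μ‖²`. -/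
noncomputable def PLag {n m : ℕ} (θ : EuclideanSpace ℝ (Fin n) → ℝ)
    (g : EuclideanSpace ℝ (Fin n) → EuclideanSpace ℝ (Fin m)) (α β : ℝ)
    (x : EuclideanSpace ℝ (Fin n)) (z lam mu : EuclideanSpace ℝ (Fin m)) : ℝ :=
  θ x + ⟪lam, g x - z⟫_ℝ + ⟪mu, z⟫_ℝ + (α / 2) * ‖z‖ ^ 2 - (β / 2) * ‖lam - mu‖ ^ 2

/-- `(x*, z*, λ*, μ*)` is a saddle point of the P-Lagrangian subject to `X`:
`x* ∈ X`, `λ* ∈ ℝᵐ₊`, and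
`L(x*, z*, λ, μ) ≤ L(x*, z*, λ*, μ*) ≤ L(x, z, λ*, μ*)` for all
`(x, z, λ, μ) ∈ X × ℝᵐ × ℝᵐ₊ × ℝᵐ`. -/
def IsSaddlePt {n m : ℕ} (θ : EuclideanSpace ℝ (Fin n) → ℝ)
    (g : EuclideanSpace ℝ (Fin n) → EuclideanSpace ℝ (Fin m)) (α β : ℝ)
    (X : Set (EuclideanSpace ℝ (Fin n)))
    (xs : EuclideanSpace ℝ (Fin n)) (zs ls ms : EuclideanSpace ℝ (Fin m)) : Prop :=
  xs ∈ X ∧ (∀ i, 0 ≤ ls i) ∧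
    (∀ lam mu : EuclideanSpace ℝ (Fin m), (∀ i, 0 ≤ lam i) →
      PLag θ g α β xs zs lam mu ≤ PLag θ g α β xs zs ls ms) ∧
    (∀ x ∈ X, ∀ z : EuclideanSpace ℝ (Fin m),
      PLag θ g α β xs zs ls ms ≤ PLag θ g α β x z ls ms)

section Coupling

variable {E F Z R : Type*} [AddGroup F] [Add R] [Preorder R] [AddRightReflectLE R]

lemma isSaddlePointOn_of_isSaddlePointOn_add_coupling {L : E → F → R} {φ : Z → F → R}
    {X : Set E} {Y : Set F} {x₀ : E} {z₀ : Z} {l₀ m₀ : F}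
    (h : IsSaddlePointOn (X ×ˢ Set.univ) (Y ×ˢ Set.univ)
      (fun p q => L p.1 q.1 + φ p.2 (q.2 - q.1)) (x₀, z₀) (l₀, m₀)) :
    IsSaddlePointOn X Y L x₀ l₀ := by
  intro x hx l hl
  have hfreeze := h (x, z₀) ⟨hx, trivial⟩ (l, m₀ - l₀ + l) ⟨hl, trivial⟩
  simp only [add_sub_cancel_right] at hfreeze
  exact le_of_add_le_add_right hfreeze

end Coupling

section Lagrangian

variable {E M N : Type*} [AddCommGroup M] [Module ℝ M] [AddCommGroup N] [Module ℝ N]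

/-- The Lagrangian `θ x + ⟨l, g x⟩` for minimizing `θ` under a constraint on `g`, where `p` pairs
multipliers with constraint values. The cone that constrains `g` enters only through the set of
multipliers over which saddle points are taken. -/
def lagrangian (p : M →ₗ[ℝ] N →ₗ[ℝ] ℝ) (θ : E → ℝ) (g : E → N) (x : E) (l : M) : ℝ :=
  θ x + p l (g x)

/-- The Lagrangian perturbed by an arbitrary coupling `φ` of a perturbation variable `z` with the
difference `μ - λ` of two multipliers, as a function of the primal pair `(x, z)` and the dual pair
`(λ, μ)`. -/
def perturbedLagrangian {Z : Type*} (p : M →ₗ[ℝ] N →ₗ[ℝ] ℝ) (θ : E → ℝ) (g : E → N)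
    (φ : Z → M → ℝ) (u : E × Z) (v : M × M) : ℝ :=
  lagrangian p θ g u.1 v.1 + φ u.2 (v.2 - v.1)

variable {p : M →ₗ[ℝ] N →ₗ[ℝ] ℝ} {θ : E → ℝ} {g : E → N} {X : Set E} {K : AddSubmonoid M}
  {x₀ : E} {l₀ : M}

lemma neg_mem_dual_of_isSaddlePointOn_lagrangian (hx₀ : x₀ ∈ X) (hl₀ : l₀ ∈ K)
    (h : IsSaddlePointOn X K (lagrangian p θ g) x₀ l₀) :
    -g x₀ ∈ PointedCone.dual p (K : Set M) := by
  intro l hl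
  simpa [lagrangian] using h x₀ hx₀ (l₀ + l) (K.add_mem hl₀ hl)

lemma pairing_eq_zero_of_isSaddlePointOn_lagrangian (hx₀ : x₀ ∈ X) (hl₀ : l₀ ∈ K)
    (h : IsSaddlePointOn X K (lagrangian p θ g) x₀ l₀) : p l₀ (g x₀) = 0 := by
  refine le_antisymm ?_ ?_
  · simpa using neg_mem_dual_of_isSaddlePointOn_lagrangian hx₀ hl₀ h hl₀
  · simpa [lagrangian] using h x₀ hx₀ 0 K.zero_mem

lemma le_of_isSaddlePointOn_lagrangian (hx₀ : x₀ ∈ X) (hl₀ : l₀ ∈ K)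
    (h : IsSaddlePointOn X K (lagrangian p θ g) x₀ l₀) {x : E} (hx : x ∈ X)
    (hgx : -g x ∈ PointedCone.dual p (K : Set M)) : θ x₀ ≤ θ x := by
  have hslack : p l₀ (g x₀) = 0 := pairing_eq_zero_of_isSaddlePointOn_lagrangian hx₀ hl₀ h
  have hpenalty : p l₀ (g x) ≤ 0 := by simpa using hgx hl₀
  calc θ x₀ = lagrangian p θ g x₀ l₀ := by rw [lagrangian, hslack, add_zero]
    _ ≤ lagrangian p θ g x l₀ := h x hx l₀ hl₀
    _ ≤ θ x := add_le_of_nonpos_right hpenalty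

theorem saddle_point_is_equilibrium_general {Z : Type*} {φ : Z → M → ℝ} {z₀ : Z} {m₀ : M}
    (hx₀ : x₀ ∈ X) (hl₀ : l₀ ∈ K)
    (h : IsSaddlePointOn (X ×ˢ Set.univ) ((K : Set M) ×ˢ Set.univ)
      (perturbedLagrangian p θ g φ) (x₀, z₀) (l₀, m₀)) :
    -g x₀ ∈ PointedCone.dual p (K : Set M) ∧
      ∀ x ∈ X, -g x ∈ PointedCone.dual p (K : Set M) → θ x₀ ≤ θ x := by
  have hL : IsSaddlePointOn X K (lagrangian p θ g) x₀ l₀ :=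
    isSaddlePointOn_of_isSaddlePointOn_add_coupling h
  exact ⟨neg_mem_dual_of_isSaddlePointOn_lagrangian hx₀ hl₀ hL,
    fun _ hx hgx => le_of_isSaddlePointOn_lagrangian hx₀ hl₀ hL hx hgx⟩

end Lagrangian

section Orthant

/-- The nonnegative orthant of `ℝ^ι`, the set of multipliers of componentwise inequality
constraints. -/
def nonnegOrthant (ι : Type*) : AddSubmonoid (EuclideanSpace ℝ ι) where
  carrier := {v | ∀ i, 0 ≤ v i}
  zero_mem' _ := le_rfl
  add_mem' hv hw i := add_nonneg (hv i) (hw i)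

variable {ι : Type*}

lemma mem_nonnegOrthant {v : EuclideanSpace ℝ ι} : v ∈ nonnegOrthant ι ↔ ∀ i, 0 ≤ v i :=
  Iff.rfl

lemma mem_dual_nonnegOrthant [Fintype ι] {v : EuclideanSpace ℝ ι} :
    v ∈ PointedCone.dual (innerₗ (EuclideanSpace ℝ ι)) (nonnegOrthant ι : Set _) ↔
      ∀ i, 0 ≤ v i := by
  classical
  refine ⟨fun hv i => ?_, fun hv w hw => ?_⟩
  · have hsingle : EuclideanSpace.single i (1 : ℝ) ∈ nonnegOrthant ι :=
      fun j => by simp only [PiLp.single_apply]; split_ifs <;> norm_num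
    simpa [EuclideanSpace.inner_single_left] using hv hsingle
  · simpa [PiLp.inner_apply] using Finset.sum_nonneg fun i _ => mul_nonneg (hv i) (hw i)

end Orthant

section PLagrangian

/-- The coupling of `z` with `w = μ - λ` whose perturbed Lagrangian is the P-Lagrangian. -/
noncomputable def proximalCoupling {F : Type*} [SeminormedAddCommGroup F]
    [InnerProductSpace ℝ F] (α β : ℝ) (z w : F) : ℝ :=
  ⟪w, z⟫_ℝ + (α / 2) * ‖z‖ ^ 2 - (β / 2) * ‖w‖ ^ 2

variable {n m : ℕ} {θ : EuclideanSpace ℝ (Fin n) → ℝ}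
  {g : EuclideanSpace ℝ (Fin n) → EuclideanSpace ℝ (Fin m)} {α β : ℝ}

lemma PLag_eq_perturbedLagrangian (x : EuclideanSpace ℝ (Fin n))
    (z lam mu : EuclideanSpace ℝ (Fin m)) :
    PLag θ g α β x z lam mu =
      perturbedLagrangian (innerₗ _) θ g (proximalCoupling α β) (x, z) (lam, mu) := by
  simp only [PLag, perturbedLagrangian, lagrangian, proximalCoupling, innerₗ_apply_apply,
    inner_sub_left, inner_sub_right, norm_sub_rev lam mu]
  ring

lemma IsSaddlePt.isSaddlePointOn_perturbedLagrangian {X : Set (EuclideanSpace ℝ (Fin n))}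
    {xs : EuclideanSpace ℝ (Fin n)} {zs ls ms : EuclideanSpace ℝ (Fin m)}
    (h : IsSaddlePt θ g α β X xs zs ls ms) :
    IsSaddlePointOn (X ×ˢ Set.univ) ((nonnegOrthant (Fin m) : Set _) ×ˢ Set.univ)
      (perturbedLagrangian (innerₗ _) θ g (proximalCoupling α β)) (xs, zs) (ls, ms) := by
  obtain ⟨-, -, hmax, hmin⟩ := h
  rintro ⟨x, z⟩ ⟨hx, -⟩ ⟨lam, mu⟩ ⟨hlam, -⟩
  simpa only [PLag_eq_perturbedLagrangian] using (hmax lam mu hlam).trans (hmin x hx z)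

end PLagrangian

/-- Theorem 1 of the paper. If `(x*, z*, λ*, μ*)` is a saddle point of the
P-Lagrangian subject to `X` (for some `α, β > 0`), then `x*` is feasible (`g(x*) ≤ 0`
componentwise) and `x*` minimizes `θ` over the feasible set. -/
theorem saddle_point_is_equilibrium {n m : ℕ}
    (θ : EuclideanSpace ℝ (Fin n) → ℝ)
    (g : EuclideanSpace ℝ (Fin n) → EuclideanSpace ℝ (Fin m))
    (α β : ℝ) (hα : 0 < α) (hβ : 0 < β)
    (X : Set (EuclideanSpace ℝ (Fin n)))
    (hXne : X.Nonempty) (hXcl : IsClosed X) (hXcv : Convex ℝ X)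
    (xs : EuclideanSpace ℝ (Fin n)) (zs ls ms : EuclideanSpace ℝ (Fin m))
    (hsaddle : IsSaddlePt θ g α β X xs zs ls ms) :
    (∀ i, g xs i ≤ 0) ∧ ∀ x ∈ X, (∀ i, g x i ≤ 0) → θ xs ≤ θ x := by
  simpa only [mem_dual_nonnegOrthant, PiLp.neg_apply, neg_nonneg] using
    saddle_point_is_equilibrium_general hsaddle.1 (mem_nonnegOrthant.2 hsaddle.2.1)
      hsaddle.isSaddlePointOn_perturbedLagrangian
end

section
/- Sufficient decrease of the P-Lagrangian (Lemma 4). Let θ : ℝⁿ → ℝ and g : ℝⁿ → ℝᵐ be continuously differentiable, α, β, γ > 0, L_g > 0, and suppose the map x ↦ ∇θ(x) + Σᵢ λᵢ ∇gᵢ(x) is Lipschitz with constant L₀ uniformly for the multipliers involved. Suppose the iterates satisfy: μᵏ = λᵏ, zᵏ = 0, z^{k+1} = (λᵏ − μᵏ)/α = 0, μ^{k+1} = λ^{k+1}, the primal step satisfies ⟨∇θ(xᵏ) + Σᵢ λᵢᵏ ∇gᵢ(xᵏ), x^{k+1} − xᵏ⟩ + (γ/2)‖x^{k+1} − xᵏ‖²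 ≤ 0, and the dual step satisfies ⟨λ^{k+1} − λᵏ, g(x^{k+1})⟩ ≤ (3L_g²/(2β))‖x^{k+1} − xᵏ‖². Then L(x^{k+1}, z^{k+1}, λ^{k+1}, μ^{k+1}) ≤ L(xᵏ, zᵏ, λᵏ, μᵏ) − (1/2)(γ − L₀ − 3L_g²/β)‖x^{k+1} − xᵏ‖²; in particular, if γ ≥ L₀ + 3L_g²/β, the P-Lagrangian value does not increase from iteration k to k+1. -/
open scoped InnerProductSpace
open Filter Topology

/-!
The P-Lagrangian exceeds the ordinary Lagrangian `θ + ⟪λ, g⟫` by `(α/2)‖z‖²` where `μ = λ`, and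
falls short of it by `(β/2)‖λ - μ‖²` where `z = 0`. Since `μᵏ = λᵏ` forces `z^{k+1} = 0`, it
decreases at least as much as the ordinary Lagrangian. The latter changes by a primal step at
fixed `λᵏ`, bounded by the descent lemma, and by a dual step `⟪λ^{k+1} - λᵏ, g(x^{k+1})⟫`.
-/

section Descent

theorem le_add_add_half_of_deriv_le_affine {φ φ' : ℝ → ℝ} {a c : ℝ}
    (hφ : ∀ t ∈ Set.Icc (0 : ℝ) 1, HasDerivWithinAt φ (φ' t) (Set.Icc 0 1) t)
    (hφ' : ∀ t ∈ Set.Icc (0 : ℝ) 1, φ' t ≤ a + c * t) :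
    φ 1 ≤ φ 0 + a + c / 2 := by
  have hmodel (t : ℝ) : HasDerivAt (fun t : ℝ => φ 0 + a * t + c / 2 * t ^ 2) (a + c * t) t := by
    refine ((((hasDerivAt_id t).const_mul a).const_add (φ 0)).add
      ((hasDerivAt_pow 2 t).const_mul (c / 2))).congr_deriv ?_
    push_cast
    ring
  have hle := image_le_of_deriv_right_le_deriv_boundary
    (fun t ht => (hφ t ht).continuousWithinAt)
    (fun t ht => (hφ t (Set.Ico_subset_Icc_self ht)).mono_of_mem_nhdsWithin
      (Icc_mem_nhdsGE_of_mem ht))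
    (by simp)
    (fun t _ => (hmodel t).continuousAt.continuousWithinAt)
    (fun t _ => (hmodel t).hasDerivWithinAt)
    (fun t ht => hφ' t (Set.Ico_subset_Icc_self ht))
    (Set.right_mem_Icc.2 zero_le_one)
  simpa using hle

variable {E : Type*} [NormedAddCommGroup E] [InnerProductSpace ℝ E]

theorem inner_le_inner_add_mul_sq_of_norm_sub_le {u v d : E} {c : ℝ}
    (h : ‖u - v‖ ≤ c * ‖d‖) : ⟪u, d⟫_ℝ ≤ ⟪v, d⟫_ℝ + c * ‖d‖ ^ 2 := by
  rw [← sub_le_iff_le_add', ← inner_sub_left]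
  calc ⟪u - v, d⟫_ℝ ≤ ‖u - v‖ * ‖d‖ := real_inner_le_norm _ _
    _ ≤ c * ‖d‖ * ‖d‖ := by gcongr
    _ = c * ‖d‖ ^ 2 := by ring

variable [CompleteSpace E] {s : Set E} {f : E → ℝ} {f' : E → E} {K γ : ℝ} {x y : E}

theorem hasDerivWithinAt_comp_lineMap {t : ℝ} {v : E} (hs : Convex ℝ s) (hx : x ∈ s) (hy : y ∈ s)
    (hf : HasGradientWithinAt f v s (AffineMap.lineMap x y t)) :
    HasDerivWithinAt (fun t : ℝ => f (AffineMap.lineMap x y t)) ⟪v, y - x⟫_ℝ (Set.Icc 0 1) t := by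
  have hmaps : Set.MapsTo (AffineMap.lineMap x y : ℝ → E) (Set.Icc 0 1) s :=
    fun _ hu => hs.lineMap_mem hx hy hu
  have hcomp := hf.hasFDerivWithinAt.comp_hasDerivWithinAt t
    AffineMap.hasDerivWithinAt_lineMap hmaps
  rw [InnerProductSpace.toDual_apply_apply] at hcomp
  exact hcomp

theorem le_add_inner_add_sq_of_lipschitz_gradient (hs : Convex ℝ s) (hx : x ∈ s) (hy : y ∈ s)
    (hf : ∀ v ∈ s, HasGradientWithinAt f (f' v) s v)
    (hK : ∀ v ∈ s, ‖f' v - f' x‖ ≤ K * ‖v - x‖) :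
    f y ≤ f x + ⟪f' x, y - x⟫_ℝ + K / 2 * ‖y - x‖ ^ 2 := by
  have hslope {t : ℝ} (ht : t ∈ Set.Icc (0 : ℝ) 1) : ⟪f' (AffineMap.lineMap x y t), y - x⟫_ℝ ≤
      ⟪f' x, y - x⟫_ℝ + K * ‖y - x‖ ^ 2 * t := by
    have hdist : ‖AffineMap.lineMap x y t - x‖ = t * ‖y - x‖ := by
      rw [← dist_eq_norm, dist_lineMap_left, Real.norm_of_nonneg ht.1, dist_comm, dist_eq_norm]
    have hLip := hK _ (hs.lineMap_mem hx hy ht)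
    rw [hdist, ← mul_assoc] at hLip
    exact (inner_le_inner_add_mul_sq_of_norm_sub_le hLip).trans_eq (by ring)
  have hquad := le_add_add_half_of_deriv_le_affine
    (fun _ ht => hasDerivWithinAt_comp_lineMap hs hx hy (hf _ (hs.lineMap_mem hx hy ht)))
    (fun _ ht => hslope ht)
  rw [AffineMap.lineMap_apply_one, AffineMap.lineMap_apply_zero] at hquad
  exact hquad.trans_eq (by ring)

theorem le_sub_sq_of_lipschitz_gradient_of_inner_add_sq_nonpos (hs : Convex ℝ s) (hx : x ∈ s)
    (hy : y ∈ s) (hf : ∀ v ∈ s, HasGradientWithinAt f (f' v) s v)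
    (hK : ∀ v ∈ s, ‖f' v - f' x‖ ≤ K * ‖v - x‖)
    (hstep : ⟪f' x, y - x⟫_ℝ + (γ / 2) * ‖y - x‖ ^ 2 ≤ 0) :
    f y ≤ f x - (1 / 2) * (γ - K) * ‖y - x‖ ^ 2 := by
  linarith [le_add_inner_add_sq_of_lipschitz_gradient hs hx hy hf hK]

theorem hasGradientAt_add_inner {ι : Type*} [Fintype ι] {θ : E → ℝ}
    {g : E → EuclideanSpace ℝ ι} {θ' : E} {g' : ι → E} (hθ : HasGradientAt θ θ' x)
    (hg : ∀ i, HasGradientAt (fun v => g v i) (g' i) x) (lam : EuclideanSpace ℝ ι) :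
    HasGradientAt (fun v => θ v + ⟪lam, g v⟫_ℝ) (θ' + ∑ i, lam i • g' i) x := by
  have hinner (v : E) : ⟪lam, g v⟫_ℝ = ∑ i, lam i * g v i := by
    simp [PiLp.inner_apply, mul_comm]
  simp only [hasGradientAt_iff_hasFDerivAt, hinner, map_add, map_sum, map_smul]
  exact hθ.hasFDerivAt.add (HasFDerivAt.fun_sum fun i _ => (hg i).hasFDerivAt.const_mul (lam i))

end Descent

section PLagrangian

variable {E F : Type*} [NormedAddCommGroup F] [InnerProductSpace ℝ F]

/-- The P-Lagrangian with multipliers in an arbitrary real inner product space; it unfolds to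
`PLag` on Euclidean spaces. -/
noncomputable def proximalPerturbedLagrangian (θ : E → ℝ) (g : E → F) (α β : ℝ) (x : E)
    (z lam mu : F) : ℝ :=
  θ x + ⟪lam, g x - z⟫_ℝ + ⟪mu, z⟫_ℝ + (α / 2) * ‖z‖ ^ 2 - (β / 2) * ‖lam - mu‖ ^ 2

variable {θ : E → ℝ} {g : E → F} {α β : ℝ}

theorem proximalPerturbedLagrangian_zero_le (hβ : 0 ≤ β) (x : E) (lam mu : F) :
    proximalPerturbedLagrangian θ g α β x 0 lam mu ≤ θ x + ⟪lam, g x⟫_ℝ := by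
  have hpenalty : 0 ≤ β / 2 * ‖lam - mu‖ ^ 2 := by positivity
  simpa [proximalPerturbedLagrangian] using hpenalty

theorem le_proximalPerturbedLagrangian_self (hα : 0 ≤ α) (x : E) (z lam : F) :
    θ x + ⟪lam, g x⟫_ℝ ≤ proximalPerturbedLagrangian θ g α β x z lam lam := by
  have hpenalty : 0 ≤ α / 2 * ‖z‖ ^ 2 := by positivity
  simpa [proximalPerturbedLagrangian, inner_sub_right, add_assoc] using hpenalty

theorem plagrangian_sufficient_decrease_general [NormedAddCommGroup E] [InnerProductSpace ℝ E]
    [CompleteSpace E] {X : Set E} {G : E → E} {γ L₀ δ : ℝ} {x x' : E} {z z' lam lam' mu mu' : F}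
    (hX : Convex ℝ X) (hx : x ∈ X) (hx' : x' ∈ X) (hα : 0 < α) (hβ : 0 ≤ β)
    (hG : ∀ v ∈ X, HasGradientWithinAt (fun v => θ v + ⟪lam, g v⟫_ℝ) (G v) X v)
    (hLip : ∀ v ∈ X, ‖G v - G x‖ ≤ L₀ * ‖v - x‖)
    (hmu : mu = lam) (hz' : z' = α⁻¹ • (lam - mu))
    (hprimal : ⟪G x, x' - x⟫_ℝ + (γ / 2) * ‖x' - x‖ ^ 2 ≤ 0)
    (hdual : ⟪lam' - lam, g x'⟫_ℝ ≤ (δ / 2) * ‖x' - x‖ ^ 2) :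
    proximalPerturbedLagrangian θ g α β x' z' lam' mu' ≤
      proximalPerturbedLagrangian θ g α β x z lam mu -
        (1 / 2) * (γ - L₀ - δ) * ‖x' - x‖ ^ 2 ∧
    (L₀ + δ ≤ γ →
      proximalPerturbedLagrangian θ g α β x' z' lam' mu' ≤
        proximalPerturbedLagrangian θ g α β x z lam mu) := by
  subst mu
  obtain rfl : z' = 0 := by simpa using hz'
  have hprimal_decrease :=
    le_sub_sq_of_lipschitz_gradient_of_inner_add_sq_nonpos hX hx hx' hG hLip hprimal
  have hdecrease : proximalPerturbedLagrangian θ g α β x' 0 lam' mu' ≤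
      proximalPerturbedLagrangian θ g α β x z lam lam -
        (1 / 2) * (γ - L₀ - δ) * ‖x' - x‖ ^ 2 :=
    calc proximalPerturbedLagrangian θ g α β x' 0 lam' mu'
      _ ≤ θ x' + ⟪lam', g x'⟫_ℝ := proximalPerturbedLagrangian_zero_le hβ x' lam' mu'
      _ = θ x' + ⟪lam, g x'⟫_ℝ + ⟪lam' - lam, g x'⟫_ℝ := by rw [inner_sub_left]; ring
      _ ≤ θ x + ⟪lam, g x⟫_ℝ - (1 / 2) * (γ - L₀) * ‖x' - x‖ ^ 2 +
          (δ / 2) * ‖x' - x‖ ^ 2 := add_le_add hprimal_decrease hdual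
      _ = θ x + ⟪lam, g x⟫_ℝ - (1 / 2) * (γ - L₀ - δ) * ‖x' - x‖ ^ 2 := by ring
      _ ≤ _ := sub_le_sub_right (le_proximalPerturbedLagrangian_self hα.le x z lam) _
  exact ⟨hdecrease, fun hγ => hdecrease.trans <| sub_le_self _ <|
    mul_nonneg (by linarith) (sq_nonneg _)⟩

end PLagrangian

/-- Lemma 4, sufficient decrease of the P-Lagrangian. Under the algorithm's
update relations (`μᵏ = λᵏ`, `zᵏ = 0`, `z^{k+1} = (λᵏ − μᵏ)/α`, `μ^{k+1} = λ^{k+1}`), a primal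
step satisfying the proximal-model decrease condition, a dual step satisfying the multiplier
estimate, and `L₀`-Lipschitzness of `x ↦ ∇θ(x) + Σᵢ λᵢᵏ ∇gᵢ(x)`, the P-Lagrangian decreases:
`L^{k+1} ≤ Lᵏ − (1/2)(γ − L₀ − 3L_g²/β)‖x^{k+1} − xᵏ‖²`; in particular it does not increase
when `γ ≥ L₀ + 3L_g²/β`. -/
theorem plagrangian_sufficient_decrease {n m : ℕ}
    (θ : EuclideanSpace ℝ (Fin n) → ℝ)
    (g : EuclideanSpace ℝ (Fin n) → EuclideanSpace ℝ (Fin m))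
    (hθ : ContDiff ℝ 1 θ) (hg : ContDiff ℝ 1 g)
    (α β γ Lg L₀ : ℝ) (hα : 0 < α) (hβ : 0 < β) (hγ : 0 < γ) (hLg : 0 < Lg)
    (xk xk1 : EuclideanSpace ℝ (Fin n))
    (zk zk1 lamk lamk1 muk muk1 : EuclideanSpace ℝ (Fin m))
    (hLip : ∀ x y : EuclideanSpace ℝ (Fin n),
      ‖(gradient θ x + ∑ i, lamk i • gradient (fun v => g v i) x) -
        (gradient θ y + ∑ i, lamk i • gradient (fun v => g v i) y)‖ ≤ L₀ * ‖x - y‖)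
    (hmuk : muk = lamk)
    (hzk : zk = 0)
    (hzk1 : zk1 = α⁻¹ • (lamk - muk))
    (hmuk1 : muk1 = lamk1)
    (hprimal : ⟪gradient θ xk + ∑ i, lamk i • gradient (fun v => g v i) xk, xk1 - xk⟫_ℝ +
        (γ / 2) * ‖xk1 - xk‖ ^ 2 ≤ 0)
    (hdual : ⟪lamk1 - lamk, g xk1⟫_ℝ ≤ (3 * Lg ^ 2 / (2 * β)) * ‖xk1 - xk‖ ^ 2) :
    PLag θ g α β xk1 zk1 lamk1 muk1 ≤
      PLag θ g α β xk zk lamk muk -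
        (1 / 2) * (γ - L₀ - 3 * Lg ^ 2 / β) * ‖xk1 - xk‖ ^ 2 ∧
    (L₀ + 3 * Lg ^ 2 / β ≤ γ →
      PLag θ g α β xk1 zk1 lamk1 muk1 ≤ PLag θ g α β xk zk lamk muk) := by
  have hgrad (x : EuclideanSpace ℝ (Fin n)) := hasGradientAt_add_inner
    (hθ.differentiable one_ne_zero x).hasGradientAt
    (fun i => (differentiableAt_euclidean.1 (hg.differentiable one_ne_zero x) i).hasGradientAt) lamk
  exact plagrangian_sufficient_decrease_general convex_univ (Set.mem_univ xk) (Set.mem_univ xk1)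
    hα hβ.le (fun x _ => (hgrad x).hasFDerivAt.hasFDerivWithinAt) (fun x _ => hLip x xk)
    hmuk hzk1 hprimal (by rwa [div_div, mul_comm β])
end

section
/- Finite length under the Kurdyka–Łojasiewicz mechanism (core of Theorem 5). Let ρ, C > 0 and δ ∈ (0, ∞]. Let φ : [0, δ) → [0, ∞) be continuous and concave with φ(0) = 0, continuously differentiable on (0, δ) with φ′ > 0 on (0, δ). Let (aₖ)_{k≥0} be nonnegative reals and (ℓₖ)_{k≥1} be reals converging to a limit ℓ̄, such that for all k ≥ 1: ℓ̄ < ℓₖ < ℓ̄ + δ, ρ aₖ² ≤ ℓₖ − ℓ_{k+1}, and φ′(ℓₖ − ℓ̄) · C · a_{k−1} ≥ 1. Then Σ_{k≥1} aₖ < ∞; more precisely, for every K ≥ 1, Σ_{k=1}^{K} aₖ ≤ a₀ + (C/ρ) φ(ℓ₁ − ℓ̄). Consequently any sequence whose consecutive step sizes are the aₖ is Cauchy, hence convergent. -/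
open Filter Topology

/-!
Concavity turns the KL inequality and the sufficient decrease into
`aₖ₊₁² ≤ aₖ · (C / ρ) (φ (ℓₖ₊₁ − ℓ̄) − φ (ℓₖ₊₂ − ℓ̄))`: the squared step is at most the previous
step times a telescoping difference. By AM-GM, `2 aₖ₊₁` is at most the sum of the two factors;
after summation one copy of the steps is absorbed, and `a₀ + (C / ρ) φ (ℓ₁ − ℓ̄)` bounds the other.
-/

theorem sum_Icc_one_add_le_of_two_mul_le {R : Type*} [CommRing R] [LinearOrder R]
    [IsStrictOrderedRing R] {a u : ℕ → R}
    (h : ∀ k, 2 * a (k + 1) ≤ a k + (u k - u (k + 1))) (K : ℕ) :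
    ∑ k ∈ Finset.Icc 1 K, a k + a K ≤ a 0 + (u 0 - u K) := by
  induction K with
  | zero => simp
  | succ K ih =>
    rw [Finset.sum_Icc_succ_top (Nat.le_add_left 1 K)]
    linarith [h K]

theorem sum_Icc_one_le_of_two_mul_le {R : Type*} [CommRing R] [LinearOrder R]
    [IsStrictOrderedRing R] {a u : ℕ → R} (ha : ∀ k, 0 ≤ a k) (hu : ∀ k, 0 ≤ u k)
    (h : ∀ k, 2 * a (k + 1) ≤ a k + (u k - u (k + 1))) (K : ℕ) :
    ∑ k ∈ Finset.Icc 1 K, a k ≤ a 0 + u 0 := by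
  linarith [sum_Icc_one_add_le_of_two_mul_le h K, ha K, hu K]

theorem summable_of_sum_Icc_one_le {a : ℕ → ℝ} {c : ℝ} (ha : ∀ k, 0 ≤ a k)
    (h : ∀ K, ∑ k ∈ Finset.Icc 1 K, a k ≤ c) : Summable a := by
  refine (summable_nat_add_iff 1).1 <|
    summable_of_sum_range_le (c := c) (fun k => ha (k + 1)) fun K => ?_
  rw [Finset.range_eq_Ico, Finset.sum_Ico_add' a 0 K 1, zero_add, Finset.Ico_add_one_right_eq_Icc]
  exact h K

theorem mul_sub_le_sub_of_concaveOn_of_hasDerivWithinAt_Iio {S : Set ℝ} {f : ℝ → ℝ} {x y f' : ℝ}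
    (hf : ConcaveOn ℝ S f) (hx : x ∈ S) (hy : y ∈ S) (hxy : x ≤ y)
    (hd : HasDerivWithinAt f f' (Set.Iio y) y) : f' * (y - x) ≤ f y - f x := by
  rcases hxy.eq_or_lt with rfl | hlt
  · simp
  · have hslope := hf.le_slope_of_hasDerivWithinAt_Iio hx hy hlt hd
    rwa [slope_def_field, le_div_iff₀ (sub_pos.2 hlt)] at hslope

/-- Here `a` and `b` are consecutive steps, `Δ` and `D` the decreases of the values and of their
images under `φ`, and `p` is the derivative of `φ`. -/
theorem two_mul_le_add_of_kl_of_sufficient_decrease {𝕜 : Type*} [Field 𝕜] [LinearOrder 𝕜]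
    [IsStrictOrderedRing 𝕜] {ρ C p a b Δ D : 𝕜} (hρ : 0 < ρ) (hC : 0 ≤ C) (ha : 0 ≤ a)
    (hdec : ρ * b ^ 2 ≤ Δ) (htangent : p * Δ ≤ D) (hKL : 1 ≤ p * C * a) :
    2 * b ≤ a + C / ρ * D := by
  have hΔ : 0 ≤ Δ := le_trans (by positivity) hdec
  have hp : 0 < p := by
    rw [mul_assoc] at hKL
    exact pos_of_mul_pos_left (zero_lt_one.trans_le hKL) (mul_nonneg hC ha)
  have hD : 0 ≤ D := (mul_nonneg hp.le hΔ).trans htangent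
  have hsq : b ^ 2 ≤ a * (C / ρ * D) := by
    calc b ^ 2 ≤ Δ / ρ := (le_div_iff₀' hρ).2 hdec
      _ ≤ p * C * a * Δ / ρ := by gcongr; exact le_mul_of_one_le_left hΔ hKL
      _ = a * (C / ρ * (p * Δ)) := by ring
      _ ≤ a * (C / ρ * D) := by gcongr
  exact two_mul_le_add_of_sq_le_mul ha (by positivity) hsq

theorem convex_setOf_pos_and_coe_lt (δ : EReal) : Convex ℝ {s : ℝ | 0 < s ∧ (s : EReal) < δ} :=
  (convex_Ioi 0).inter
    (Set.ordConnected_Iio.preimage_mono EReal.coe_strictMono.monotone).convex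

theorem kl_finite_length_general {ρ C : ℝ} (hρ : 0 < ρ) (hC : 0 ≤ C)
    {S : Set ℝ} {φ φ' : ℝ → ℝ} (hφnonneg : ∀ s ∈ S, 0 ≤ φ s) (hφconc : ConcaveOn ℝ S φ)
    (hφderiv : ∀ s ∈ S, HasDerivWithinAt φ (φ' s) (Set.Iio s) s)
    {a : ℕ → ℝ} (ha : ∀ k, 0 ≤ a k) {ℓ : ℕ → ℝ} {ℓbar : ℝ}
    (hmem : ∀ k, 1 ≤ k → ℓ k - ℓbar ∈ S)
    (hdec : ∀ k, 1 ≤ k → ρ * a k ^ 2 ≤ ℓ k - ℓ (k + 1))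
    (hKL : ∀ k, 1 ≤ k → 1 ≤ φ' (ℓ k - ℓbar) * C * a (k - 1)) :
    Summable a ∧
    (∀ K, ∑ k ∈ Finset.Icc 1 K, a k ≤ a 0 + C / ρ * φ (ℓ 1 - ℓbar)) ∧
    (∀ {X : Type*} [PseudoMetricSpace X] (x : ℕ → X),
      (∀ k, dist (x k) (x (k + 1)) ≤ a k) → CauchySeq x) := by
  let u : ℕ → ℝ := fun k => C / ρ * φ (ℓ (k + 1) - ℓbar)
  have hu (k) : 0 ≤ u k :=
    mul_nonneg (div_nonneg hC hρ.le) (hφnonneg _ (hmem (k + 1) (Nat.le_add_left 1 k)))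
  have hstep (k) : 2 * a (k + 1) ≤ a k + (u k - u (k + 1)) := by
    have hk : 1 ≤ k + 1 := Nat.le_add_left 1 k
    have hsq_nonneg : 0 ≤ ρ * a (k + 1) ^ 2 := by positivity
    have htangent := mul_sub_le_sub_of_concaveOn_of_hasDerivWithinAt_Iio hφconc
      (hmem (k + 2) (Nat.le_add_left 1 (k + 1))) (hmem (k + 1) hk)
      (by linarith [hdec (k + 1) hk]) (hφderiv _ (hmem (k + 1) hk))
    rw [sub_sub_sub_cancel_right] at htangent
    rw [← mul_sub]
    exact two_mul_le_add_of_kl_of_sufficient_decrease hρ hC (ha k) (hdec (k + 1) hk) htangent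
      (hKL (k + 1) hk)
  have hbound := sum_Icc_one_le_of_two_mul_le ha hu hstep
  have hsum := summable_of_sum_Icc_one_le ha hbound
  exact ⟨hsum, hbound, fun _ hx => cauchySeq_of_dist_le_of_summable a hx hsum⟩

/-- finite length under the Kurdyka–Łojasiewicz mechanism, core of
Theorem 5. Let `ρ, C > 0`, `δ ∈ (0, ∞]`, and let `φ` be a desingularizing function on
`[0, δ)` (continuous, concave, `φ(0) = 0`, continuously differentiable with positive
derivative `φ′` on `(0, δ)`). If the nonnegative step sizes `aₖ` and values `ℓₖ → ℓ̄` satisfy,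
for all `k ≥ 1`, `ℓ̄ < ℓₖ < ℓ̄ + δ`, the sufficient decrease `ρaₖ² ≤ ℓₖ − ℓ_{k+1}`, and the
KL inequality `φ′(ℓₖ − ℓ̄)·C·a_{k−1} ≥ 1`, then `Σ aₖ < ∞`, with
`Σ_{k=1}^{K} aₖ ≤ a₀ + (C/ρ)φ(ℓ₁ − ℓ̄)` for every `K ≥ 1`; consequently any sequence in a
complete normed space whose consecutive step sizes are the `aₖ` is Cauchy, hence convergent. -/
theorem kl_finite_length
    (ρ C : ℝ) (hρ : 0 < ρ) (hC : 0 < C)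
    (δ : EReal) (hδ : 0 < δ)
    (φ φ' : ℝ → ℝ)
    (hφ0 : φ 0 = 0)
    (hφnonneg : ∀ s : ℝ, 0 ≤ s → (s : EReal) < δ → 0 ≤ φ s)
    (hφcont : ContinuousOn φ {s : ℝ | 0 ≤ s ∧ (s : EReal) < δ})
    (hφconc : ConcaveOn ℝ {s : ℝ | 0 ≤ s ∧ (s : EReal) < δ} φ)
    (hφderiv : ∀ s : ℝ, 0 < s → (s : EReal) < δ → HasDerivAt φ (φ' s) s)
    (hφ'cont : ContinuousOn φ' {s : ℝ | 0 < s ∧ (s : EReal) < δ})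
    (hφ'pos : ∀ s : ℝ, 0 < s → (s : EReal) < δ → 0 < φ' s)
    (a : ℕ → ℝ) (ha : ∀ k, 0 ≤ a k)
    (ℓ : ℕ → ℝ) (ℓbar : ℝ)
    (hconv : Tendsto ℓ atTop (𝓝 ℓbar))
    (hgt : ∀ k, 1 ≤ k → ℓbar < ℓ k)
    (hlt : ∀ k, 1 ≤ k → ((ℓ k - ℓbar : ℝ) : EReal) < δ)
    (hdec : ∀ k, 1 ≤ k → ρ * a k ^ 2 ≤ ℓ k - ℓ (k + 1))
    (hKL : ∀ k, 1 ≤ k → 1 ≤ φ' (ℓ k - ℓbar) * C * a (k - 1)) :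
    Summable a ∧
    (∀ K, 1 ≤ K → ∑ k ∈ Finset.Icc 1 K, a k ≤ a 0 + (C / ρ) * φ (ℓ 1 - ℓbar)) ∧
    (∀ (E : Type) [NormedAddCommGroup E] [CompleteSpace E] (xseq : ℕ → E),
      (∀ k, ‖xseq (k + 1) - xseq k‖ = a k) →
      ∃ xlim : E, Tendsto xseq atTop (𝓝 xlim)) := by
  obtain ⟨hsum, hbound, hcauchy⟩ := kl_finite_length_general hρ hC.le
    (S := {s : ℝ | 0 < s ∧ (s : EReal) < δ}) (fun s hs => hφnonneg s hs.1.le hs.2)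
    (hφconc.subset (fun _ hs => ⟨hs.1.le, hs.2⟩) (convex_setOf_pos_and_coe_lt δ))
    (fun s hs => (hφderiv s hs.1 hs.2).hasDerivWithinAt) ha
    (fun k hk => ⟨sub_pos.2 (hgt k hk), hlt k hk⟩) hdec hKL
  exact ⟨hsum, fun K _ => hbound K, fun E _ _ x hx => cauchySeq_tendsto_of_complete <|
    hcauchy x fun k => by rw [dist_comm, dist_eq_norm, hx]⟩
end
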